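/- Let P ⊂ ℝ^n be a compact polytope with nonempty interior given by a non-redundant description with pairwise distinct primitive normal vectors v_1, …, v_m ∈ ℤ^n spanning ℝ^n, and let u be a point of the interior of P. Then the generalized leading term equation at u admits a solution if and only if for every nonzero lattice vector w ∈ ℤ^n the point u belongs to Trop(P, w). -/

import Mathlib

open scoped Classical

noncomputable section

/-- Integer inner product `⟨w, v⟩ = ∑ i, w i * v i` on `ℤ^n`. -/
def zdot {n : ℕ} (w v : Fin n → ℤ) : ℤ := ∑ i, w i * v i

/-- A lattice vector is primitive if the gcd of its entries is `1`. -/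
def Primitive {n : ℕ} (w : Fin n → ℤ) : Prop := Finset.univ.gcd w = 1

/-- The affine function `l_j(u) = ⟨u, v_j⟩ - λ_j`. -/
def lf {n m : ℕ} (v : Fin m → Fin n → ℤ) (lam : Fin m → ℝ) (j : Fin m) (u : Fin n → ℝ) : ℝ :=
  (∑ i, u i * (v j i : ℝ)) - lam j

/-- The polytope `P = {u : l_j(u) ≥ 0 for all j}`. -/
def Pset {n m : ℕ} (v : Fin m → Fin n → ℤ) (lam : Fin m → ℝ) : Set (Fin n → ℝ) :=
  {u | ∀ j, 0 ≤ lf v lam j u}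

/-- The tropicalization of `P` relative to the lattice vector `w`: the set of points at which
the minimum of `{l_j(u) : ⟨w, v_j⟩ ≠ 0}` is attained by at least two distinct indices. -/
def TropRel {n m : ℕ} (v : Fin m → Fin n → ℤ) (lam : Fin m → ℝ) (w : Fin n → ℤ) :
    Set (Fin n → ℝ) :=
  {u | ∃ j₁ j₂ : Fin m, j₁ ≠ j₂ ∧ zdot w (v j₁) ≠ 0 ∧ zdot w (v j₂) ≠ 0 ∧
        lf v lam j₁ u = lf v lam j₂ u ∧
        ∀ j : Fin m, zdot w (v j) ≠ 0 → lf v lam j₁ u ≤ lf v lam j u}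

/-- The generalized leading term equation at `u` admits a solution: there are nonzero complex
numbers `c_j` and nonzero `y_i` such that for every `j₀` and every lattice vector `w` with
`⟨w, v_j⟩ = 0` for all `j` with `l_j(u) < l_{j₀}(u)`, one has
`∑_{j : l_j(u) = l_{j₀}(u)} c_j ⟨w, v_j⟩ y^{v_j} = 0`. -/
def GLTESolvable {n m : ℕ} (v : Fin m → Fin n → ℤ) (lam : Fin m → ℝ) (u : Fin n → ℝ) : Prop :=
  ∃ (c : Fin m → ℂ) (y : Fin n → ℂ), (∀ j, c j ≠ 0) ∧ (∀ i, y i ≠ 0) ∧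
    ∀ (j₀ : Fin m) (w : Fin n → ℤ),
      (∀ j : Fin m, lf v lam j u < lf v lam j₀ u → zdot w (v j) = 0) →
      (∑ j ∈ Finset.univ.filter (fun j => lf v lam j u = lf v lam j₀ u),
          c j * (zdot w (v j) : ℂ) * ∏ i, y i ^ (v j i)) = 0

/-- A solution of the linear system at every level which is nonzero at the index `j₀`. -/
lemma exists_coeff_ne_zero {n m : ℕ} (v : Fin m → Fin n → ℤ) (l : Fin m → ℝ)
    (h : ∀ w : Fin n → ℤ, w ≠ 0 → ∃ j₁ j₂ : Fin m, j₁ ≠ j₂ ∧ zdot w (v j₁) ≠ 0 ∧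
      zdot w (v j₂) ≠ 0 ∧ l j₁ = l j₂ ∧ ∀ j : Fin m, zdot w (v j) ≠ 0 → l j₁ ≤ l j)
    (j₀ : Fin m) :
    ∃ c : Fin m → ℚ, c j₀ ≠ 0 ∧ (∀ j, l j ≠ l j₀ → c j = 0) ∧
      ∀ w : Fin n → ℤ, (∀ j, l j < l j₀ → zdot w (v j) = 0) →
        ∑ j, c j * (zdot w (v j) : ℚ) = 0 := by
  let V : Fin m → Fin n → ℚ := fun j i => (v j i : ℚ)
  let g : Fin m → Fin n → ℚ := fun j => if l j ≤ l j₀ ∧ j ≠ j₀ then V j else 0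
  by_cases hmem : V j₀ ∈ Submodule.span ℚ (Set.range g)
  · obtain ⟨a, ha⟩ := (Submodule.mem_span_range_iff_exists_fun ℚ).1 hmem
    refine ⟨fun j => if j = j₀ then -1 else if l j = l j₀ then a j else 0, by simp, ?_, ?_⟩
    · intro j hj
      have : j ≠ j₀ := fun e => hj (by rw [e])
      simp [this, hj]
    · intro w hw
      have key : ∑ j, a j * (if l j ≤ l j₀ ∧ j ≠ j₀ then (zdot w (v j) : ℚ) else 0)
          = (zdot w (v j₀) : ℚ) := by
        have h1 : (zdot w (v j₀) : ℚ) = ∑ i, (w i : ℚ) * V j₀ i := by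
          simp [zdot, V]
        rw [h1, ← ha]
        simp only [Finset.sum_apply, Pi.smul_apply, smul_eq_mul, Finset.mul_sum]
        rw [Finset.sum_comm]
        refine Finset.sum_congr rfl fun j _ => ?_
        by_cases hj : l j ≤ l j₀ ∧ j ≠ j₀
        · simp only [g, if_pos hj, V, zdot]
          push_cast
          rw [Finset.mul_sum]
          exact Finset.sum_congr rfl fun i _ => by ring
        · simp [g, if_neg hj]
      have h2 : ∀ j, (if j = j₀ then (-1 : ℚ) else if l j = l j₀ then a j else 0)
            * (zdot w (v j) : ℚ)
          = a j * (if l j ≤ l j₀ ∧ j ≠ j₀ then (zdot w (v j) : ℚ) else 0)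
            - (if j = j₀ then (zdot w (v j) : ℚ) else 0) := by
        intro j
        by_cases hj : j = j₀
        · simp [hj]
        · rcases lt_trichotomy (l j) (l j₀) with hl | hl | hl
          · simp [hj, hl.ne, hl.le, hw j hl]
          · simp [hj, hl]
          · simp [hj, hl.ne', not_le.2 hl]
      simp only [h2]
      rw [Finset.sum_sub_distrib, key]
      simp
  · exfalso
    obtain ⟨f, hf0, hfk⟩ := Submodule.exists_le_ker_of_notMem hmem
    obtain ⟨b, hb⟩ := IsLocalization.exist_integer_multiples_of_finite (nonZeroDivisors ℤ)
      (fun i : Fin n => f (Pi.single i 1))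
    choose w hw using hb
    have hb0 : ((b : ℤ) : ℚ) ≠ 0 := by
      exact_mod_cast nonZeroDivisors.ne_zero b.2
    have hwv : ∀ j, (zdot w (v j) : ℚ) = ((b : ℤ) : ℚ) * f (V j) := by
      intro j
      rw [LinearMap.pi_apply_eq_sum_univ f (V j), Finset.mul_sum, zdot]
      push_cast
      refine Finset.sum_congr rfl fun i _ => ?_
      have := hw i
      simp only [eq_intCast, zsmul_eq_mul] at this
      rw [this]
      have e : (fun k => if i = k then (1 : ℚ) else 0) = Pi.single i 1 := by
        ext k; simp [Pi.single_apply, eq_comm]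
      rw [e]
      simp only [V, smul_eq_mul]
      ring
    have hz : ∀ j, l j ≤ l j₀ → j ≠ j₀ → zdot w (v j) = 0 := by
      intro j h1 h2
      have h3 : f (g j) = 0 := hfk (Submodule.subset_span ⟨j, rfl⟩)
      simp only [g, if_pos (And.intro h1 h2)] at h3
      have := hwv j
      rw [h3, mul_zero] at this
      exact_mod_cast this
    have hnz : zdot w (v j₀) ≠ 0 := by
      intro h0
      have := hwv j₀
      rw [h0, Int.cast_zero] at this
      exact (mul_ne_zero hb0 hf0) this.symm
    have hw0 : w ≠ 0 := by
      rintro rfl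
      exact hnz (by simp [zdot])
    obtain ⟨j₁, j₂, hne, hz1, hz2, he, hmin⟩ := h w hw0
    have hle := hmin j₀ hnz
    have e1 : j₁ = j₀ := by
      by_contra hc
      exact hz1 (hz j₁ hle hc)
    have e2 : j₂ = j₀ := by
      by_contra hc
      exact hz2 (hz j₂ (he ▸ hle) hc)
    exact hne (e1.trans e2.symm)

/-- A solution of the linear system at every level with all entries nonzero. -/
lemma exists_coeff {n m : ℕ} (v : Fin m → Fin n → ℤ) (l : Fin m → ℝ)
    (h : ∀ w : Fin n → ℤ, w ≠ 0 → ∃ j₁ j₂ : Fin m, j₁ ≠ j₂ ∧ zdot w (v j₁) ≠ 0 ∧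
      zdot w (v j₂) ≠ 0 ∧ l j₁ = l j₂ ∧ ∀ j : Fin m, zdot w (v j) ≠ 0 → l j₁ ≤ l j) :
    ∃ c : Fin m → ℚ, (∀ j, c j ≠ 0) ∧ ∀ (j₀ : Fin m) (w : Fin n → ℤ),
      (∀ j, l j < l j₀ → zdot w (v j) = 0) →
        ∑ j ∈ Finset.univ.filter (fun j => l j = l j₀), c j * (zdot w (v j) : ℚ) = 0 := by
  let p : Submodule ℚ (Fin m → ℚ) :=
    { carrier := {c | ∀ (j₀ : Fin m) (w : Fin n → ℤ),
        (∀ j, l j < l j₀ → zdot w (v j) = 0) →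
        ∑ j ∈ Finset.univ.filter (fun j => l j = l j₀), c j * (zdot w (v j) : ℚ) = 0}
      add_mem' := by
        intro a b ha hb j₀ w hw
        simp only [Pi.add_apply, add_mul, Finset.sum_add_distrib]
        rw [ha j₀ w hw, hb j₀ w hw, add_zero]
      zero_mem' := by
        intro j₀ w _
        simp
      smul_mem' := by
        intro r a ha j₀ w hw
        simp only [Pi.smul_apply, smul_eq_mul, mul_assoc]
        rw [← Finset.mul_sum, ha j₀ w hw, mul_zero] }
  obtain ⟨c, hc, hc0⟩ := Module.Dual.exists_forall_mem_ne_zero_of_forall_exists p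
    (fun j : Fin m => (LinearMap.proj j : (Fin m → ℚ) →ₗ[ℚ] ℚ)) (by
      intro i
      obtain ⟨c, h1, h2, h3⟩ := exists_coeff_ne_zero v l h i
      refine ⟨c, ?_, h1⟩
      intro j₀ w hw
      by_cases hl : l j₀ = l i
      · rw [← h3 w (by rw [← hl]; exact hw)]
        refine Finset.sum_subset (Finset.subset_univ _) fun j _ hj => ?_
        simp only [Finset.mem_filter, Finset.mem_univ, true_and] at hj
        rw [h2 j (hl ▸ hj), zero_mul]
      · refine Finset.sum_eq_zero fun j hj => ?_
        simp only [Finset.mem_filter, Finset.mem_univ, true_and] at hj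
        rw [h2 j (hj ▸ hl), zero_mul])
  exact ⟨c, hc0, hc⟩

/-- If the `v j` span, a nonzero `w` pairs nontrivially with some `v j`. -/
lemma exists_zdot_ne_zero {n m : ℕ} (v : Fin m → Fin n → ℤ)
    (hspan : Submodule.span ℝ (Set.range fun j => fun i => ((v j i : ℝ)))
      = (⊤ : Submodule ℝ (Fin n → ℝ))) (w : Fin n → ℤ) (hw : w ≠ 0) :
    ∃ j, zdot w (v j) ≠ 0 := by
  by_contra! hc
  apply hw
  let f : (Fin n → ℝ) →ₗ[ℝ] ℝ := ∑ i, (w i : ℝ) • LinearMap.proj i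
  have hle : Submodule.span ℝ (Set.range fun j => fun i => ((v j i : ℝ))) ≤ LinearMap.ker f := by
    rw [Submodule.span_le]
    rintro _ ⟨j, rfl⟩
    have := hc j
    simp only [SetLike.mem_coe, LinearMap.mem_ker, f, LinearMap.sum_apply, LinearMap.smul_apply,
      LinearMap.proj_apply, smul_eq_mul]
    rw [zdot] at this
    exact_mod_cast this
  rw [hspan] at hle
  ext i
  have h1 : f (Pi.single i 1) = 0 := hle Submodule.mem_top
  simpa [f, Pi.single_apply] using h1

/-- For a compact polytope `P ⊂ ℝ^n` with nonempty interior, given by a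
non-redundant description with pairwise distinct primitive normal vectors spanning `ℝ^n`, and a
point `u` of the interior of `P`, the generalized leading term equation at `u` admits a solution
iff `u ∈ Trop(P, w)` for every nonzero lattice vector `w`. -/
theorem statement1 {n m : ℕ} (hn : 1 ≤ n) (hm : 1 ≤ m)
    (v : Fin m → Fin n → ℤ) (lam : Fin m → ℝ)
    (hdist : Function.Injective v)
    (hprim : ∀ j, Primitive (v j))
    (hspan : Submodule.span ℝ (Set.range fun j => fun i => ((v j i : ℝ)))
      = (⊤ : Submodule ℝ (Fin n → ℝ)))
    (hcpt : IsCompact (Pset v lam))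
    (hint : (interior (Pset v lam)).Nonempty)
    (hnr : ∀ j, ∃ p ∈ Pset v lam, lf v lam j p = 0 ∧ ∀ k, k ≠ j → 0 < lf v lam k p)
    (u : Fin n → ℝ) (hu : u ∈ interior (Pset v lam)) :
    GLTESolvable v lam u ↔ (∀ w : Fin n → ℤ, w ≠ 0 → u ∈ TropRel v lam w) := by
  constructor
  · rintro ⟨c, y, hc, hy, heq⟩ w hw
    obtain ⟨k, hk⟩ := exists_zdot_ne_zero v hspan w hw
    obtain ⟨j₁, hj₁, hmin⟩ := Finset.exists_min_image
      (Finset.univ.filter fun j => zdot w (v j) ≠ 0) (fun j => lf v lam j u) ⟨k, by simpa using hk⟩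
    simp only [Finset.mem_filter, Finset.mem_univ, true_and] at hj₁ hmin
    by_contra hcon
    have huniq : ∀ j, j ≠ j₁ → lf v lam j u = lf v lam j₁ u → zdot w (v j) = 0 := by
      intro j hj hl
      by_contra hz
      exact hcon ⟨j₁, j, hj.symm, hj₁, hz, hl.symm, hmin⟩
    have h1 := heq j₁ w (by
      intro j hj
      by_contra hz
      exact absurd (hmin j hz) (not_le.2 hj))
    rw [Finset.sum_eq_single j₁] at h1
    · refine (mul_ne_zero (mul_ne_zero (hc j₁) (Int.cast_ne_zero.2 hj₁)) ?_) h1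
      exact Finset.prod_ne_zero_iff.2 fun i _ => zpow_ne_zero _ (hy i)
    · intro j hj hne
      simp only [Finset.mem_filter, Finset.mem_univ, true_and] at hj
      simp [huniq j hne hj]
    · intro hj
      simp at hj
  · intro h
    obtain ⟨c, hc0, hc⟩ := exists_coeff v (fun j => lf v lam j u) h
    refine ⟨fun j => (c j : ℂ), fun _ => 1, fun j => Rat.cast_ne_zero.2 (hc0 j), by simp, ?_⟩
    intro j₀ w hw
    have := hc j₀ w hw
    simp only [one_zpow, Finset.prod_const_one, mul_one]
    exact_mod_cast congrArg (fun q : ℚ => (q : ℂ)) this
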